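/- Let F : ℝ^d × ℝ^d → ℝ^d, let N = pn ≥ 3 with p ≥ 2, and fix z = (x_1,…,x_N) ∈ (ℝ^d)^N. With χ_i(z) the random-batch noise, its second moment is E|χ_i(z)|² = (1−1/N)²·(1/(p−1) − 1/(N−1))·Λ_i(z), where Λ_i(z) = (1/(N−2))·Σ_{j≠i} | F(x_i,x_j) − (1/(N−1))·Σ_{k≠i} F(x_i,x_k) |². -/

import Mathlib

open Finset

/-- A finset `P` of subsets of `{1,…,N}` (modeled as `Fin N`) is a batch partition into
`n` batches of size `p` if it has `n` members, each of size `p`, and every index lies in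
exactly one member. -/
def IsBatchPartition (N n p : ℕ) (P : Finset (Finset (Fin N))) : Prop :=
  P.card = n ∧ (∀ B ∈ P, B.card = p) ∧ ∀ i : Fin N, (P.filter fun B => i ∈ B).card = 1

instance (N n p : ℕ) : DecidablePred (IsBatchPartition N n p) := fun P => by
  unfold IsBatchPartition; infer_instance

/-- The batch containing index `i` in the partition `P`: the set of indices lying in a
common member of `P` with `i`. -/
def batchOf {N n p : ℕ} (P : {P : Finset (Finset (Fin N)) // IsBatchPartition N n p P})
    (i : Fin N) : Finset (Fin N) :=
  Finset.univ.filter fun j => ∃ B ∈ P.1, i ∈ B ∧ j ∈ B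

/-- The random-batch noise `χ_i(z)`. -/
noncomputable def rbmNoise {d N n p : ℕ} (F : EuclideanSpace ℝ (Fin d) →
      EuclideanSpace ℝ (Fin d) → EuclideanSpace ℝ (Fin d))
    (x : Fin N → EuclideanSpace ℝ (Fin d)) (i : Fin N)
    (P : {P : Finset (Finset (Fin N)) // IsBatchPartition N n p P}) :
    EuclideanSpace ℝ (Fin d) :=
  ((N : ℝ)⁻¹) • ∑ j ∈ Finset.univ.erase i, F (x i) (x j)
    - ((1 - (N : ℝ)⁻¹) * ((p : ℝ) - 1)⁻¹) • ∑ j ∈ (batchOf P i).erase i, F (x i) (x j)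

/-!
Relabelling the indices shows that, for a uniformly random batch partition, the sets
`C_i \ {i}` form a 2-design on the other indices. Hence `E[1_{j ∈ C_i} 1_{k ∈ C_i}]` takes
one value for `j = k` and one for `j ≠ k`; for a centred population the inner products `⟪G_j, G_k⟫`
sum to zero, so only the difference of the two values survives, and double counting evaluates it.
This gives the variance of the mean of a sample drawn without replacement, and the random-batch
noise is `1 - 1/N` times the population mean minus the mean over the batch of `i`.
-/

theorem exists_perm_apply_eq_and_apply_eq {ι : Type*} {S : Set ι} {j k j' k' : ι} (hj : j ∈ S)
    (hk : k ∈ S) (hjk : j ≠ k) (hj' : j' ∈ S) (hk' : k' ∈ S) (hjk' : j' ≠ k') :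
    ∃ σ : Equiv.Perm ι, (∀ a ∉ S, σ a = a) ∧ σ j = j' ∧ σ k = k' := by
  classical
  obtain ⟨τ, hτj, hτk⟩ : ∃ τ : Equiv.Perm S, τ ⟨j, hj⟩ = ⟨j', hj'⟩ ∧ τ ⟨k, hk⟩ = ⟨k', hk'⟩ :=
    MulAction.is_two_pretransitive_iff.1 (Equiv.Perm.isMultiplyPretransitive S 2)
      (by simpa using hjk) (by simpa using hjk')
  refine ⟨Equiv.Perm.ofSubtype τ, fun a => τ.ofSubtype_apply_of_not_mem, ?_, ?_⟩
  · simpa [hτj] using τ.ofSubtype_apply_coe ⟨j, hj⟩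
  · simpa [hτk] using τ.ofSubtype_apply_coe ⟨k, hk⟩

section TwoDesign

variable {ι Ω : Type*} [DecidableEq ι] [Fintype Ω] {S : Finset ι} {C : Ω → Finset ι} {m r l : ℕ}

/-- The blocks `C ω` form a 2-design on `S`: they are `m`-subsets of `S`, each point lies in `r` of
them and each pair of distinct points in `l` of them. Blocks are indexed by `Ω`, so that they may be
repeated, and `r` is recorded because `l` does not determine it when `m = 1`. -/
structure IsTwoDesign (S : Finset ι) (C : Ω → Finset ι) (m r l : ℕ) : Prop where
  subset : ∀ ω, C ω ⊆ S
  card_block : ∀ ω, #(C ω) = m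
  card_mem : ∀ j ∈ S, #{ω | j ∈ C ω} = r
  card_mem_and_mem : ∀ j ∈ S, ∀ k ∈ S, j ≠ k → #{ω | j ∈ C ω ∧ k ∈ C ω} = l

namespace IsTwoDesign

theorem card_mul_eq (h : IsTwoDesign S C m r l) : #S * r = Fintype.card Ω * m := by
  refine (card_mul_eq_card_mul (fun ω j => j ∈ C ω) (s := univ) (fun ω _ => ?_) h.card_mem).symm
  rw [bipartiteAbove, filter_mem_eq_inter, inter_eq_right.2 (h.subset ω), h.card_block]

theorem add_card_sub_one_mul_eq (h : IsTwoDesign S C m r l) (hS : S.Nonempty) :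
    r + (#S - 1) * l = r * m := by
  obtain ⟨j, hj⟩ := hS
  calc r + (#S - 1) * l
      = #{ω | j ∈ C ω ∧ j ∈ C ω} + ∑ k ∈ S.erase j, #{ω | j ∈ C ω ∧ k ∈ C ω} := by
        rw [sum_congr rfl fun k hk =>
          h.card_mem_and_mem j hj k (mem_of_mem_erase hk) (ne_of_mem_erase hk).symm]
        simp [h.card_mem j hj, hj]
    _ = ∑ k ∈ S, #(bipartiteBelow (fun ω k => k ∈ C ω) {ω | j ∈ C ω} k) := by
        simp only [bipartiteBelow, filter_filter]
        exact add_sum_erase S (fun k => #{ω | j ∈ C ω ∧ k ∈ C ω}) hj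
    _ = ∑ ω with j ∈ C ω, #(bipartiteAbove (fun ω k => k ∈ C ω) S ω) :=
        (sum_card_bipartiteAbove_eq_sum_card_bipartiteBelow _).symm
    _ = r * m := by
        simp [bipartiteAbove, filter_mem_eq_inter, inter_eq_right.2 (h.subset _), h.card_block,
          h.card_mem j hj]

theorem card_mul_card_sub_one_mul_sub (h : IsTwoDesign S C m r l) (hS : S.Nonempty) :
    (#S : ℝ) * (#S - 1) * (r - l) = Fintype.card Ω * (m * (#S - m)) := by
  have hpoint : (#S : ℝ) * r = Fintype.card Ω * m := by exact_mod_cast h.card_mul_eq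
  have hpair : (r : ℝ) + (#S - 1) * l = r * m := by
    rw [← Nat.cast_pred hS.card_pos]
    exact_mod_cast h.add_card_sub_one_mul_eq hS
  linear_combination ((#S : ℝ) - m) * hpoint - (#S : ℝ) * hpair

end IsTwoDesign

theorem card_filter_mem_and_mem_of_map (σ : Equiv.Perm ι) (T : Equiv.Perm Ω)
    (hT : ∀ ω, C (T ω) = (C ω).map σ.toEmbedding) (j k : ι) :
    #{ω | σ j ∈ C ω ∧ σ k ∈ C ω} = #{ω | j ∈ C ω ∧ k ∈ C ω} :=
  (card_equiv T fun ω => by simp [hT]).symm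

theorem exists_isTwoDesign_of_symmetric (hS : S.Nontrivial) (hCS : ∀ ω, C ω ⊆ S)
    (hCm : ∀ ω, #(C ω) = m)
    (hsymm : ∀ σ : Equiv.Perm ι, (∀ a ∉ S, σ a = a) →
      ∃ T : Equiv.Perm Ω, ∀ ω, C (T ω) = (C ω).map σ.toEmbedding) :
    ∃ r l, IsTwoDesign S C m r l := by
  obtain ⟨u, hu, v, hv, huv⟩ := hS
  refine ⟨#{ω | u ∈ C ω}, #{ω | u ∈ C ω ∧ v ∈ C ω}, hCS, hCm, fun j hj => ?_,
    fun j hj k hk hjk => ?_⟩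
  · obtain ⟨k, hk, hkj⟩ := Finset.Nontrivial.exists_ne ⟨u, hu, v, hv, huv⟩ j
    obtain ⟨σ, hσ, rfl, -⟩ := exists_perm_apply_eq_and_apply_eq hu hv huv hj hk hkj.symm
    obtain ⟨T, hT⟩ := hsymm σ hσ
    simpa using card_filter_mem_and_mem_of_map σ T hT u u
  · obtain ⟨σ, hσ, rfl, rfl⟩ := exists_perm_apply_eq_and_apply_eq hu hv huv hj hk hjk
    obtain ⟨T, hT⟩ := hsymm σ hσ
    exact card_filter_mem_and_mem_of_map σ T hT u v

end TwoDesign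

section Mean

variable {ι E : Type*}

/-- The mean of `f` over the finset `S`, with value `0` when `S` is empty; it serves both as
population mean and as sample mean. -/
noncomputable def mean [AddCommGroup E] [Module ℝ E] (S : Finset ι) (f : ι → E) : E :=
  (#S : ℝ)⁻¹ • ∑ j ∈ S, f j

theorem card_smul_mean [AddCommGroup E] [Module ℝ E] (S : Finset ι) (f : ι → E) :
    (#S : ℝ) • mean S f = ∑ j ∈ S, f j := by
  rcases S.eq_empty_or_nonempty with rfl | hS
  · simp
  · exact smul_inv_smul₀ (by exact_mod_cast hS.card_ne_zero) _

theorem mean_const_smul [AddCommGroup E] [Module ℝ E] (S : Finset ι) (c : ℝ) (f : ι → E) :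
    mean S (fun j => c • f j) = c • mean S f := by
  rw [mean, ← smul_sum, smul_comm, mean]

theorem sum_sub_const_eq_card_smul [AddCommGroup E] [Module ℝ E] (S : Finset ι) (f : ι → E)
    (c : E) : ∑ j ∈ S, (f j - c) = (#S : ℝ) • (mean S f - c) := by
  rw [sum_sub_distrib, sum_const, ← Nat.cast_smul_eq_nsmul ℝ, smul_sub, card_smul_mean]

variable {Ω : Type*} [DecidableEq ι] [Fintype Ω] [NormedAddCommGroup E] [InnerProductSpace ℝ E]
  {S : Finset ι} {C : Ω → Finset ι} {m r l : ℕ}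

theorem sum_norm_sq_sum_eq_sum_card_mul_inner (hCS : ∀ ω, C ω ⊆ S) (G : ι → E) :
    ∑ ω, ‖∑ j ∈ C ω, G j‖ ^ 2 =
      ∑ j ∈ S, ∑ k ∈ S, (#{ω | j ∈ C ω ∧ k ∈ C ω} : ℝ) * inner ℝ (G j) (G k) := by
  calc ∑ ω, ‖∑ j ∈ C ω, G j‖ ^ 2
      = ∑ ω, ∑ q ∈ C ω ×ˢ C ω, inner ℝ (G q.1) (G q.2) := by
        simp_rw [← real_inner_self_eq_norm_sq, sum_inner, inner_sum, sum_product]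
    _ = ∑ q ∈ S ×ˢ S, ∑ ω with q.1 ∈ C ω ∧ q.2 ∈ C ω, inner ℝ (G q.1) (G q.2) :=
        sum_comm' fun ω q => by
          simpa using fun hj hk => And.intro (hCS ω hj) (hCS ω hk)
    _ = ∑ j ∈ S, ∑ k ∈ S, (#{ω | j ∈ C ω ∧ k ∈ C ω} : ℝ) * inner ℝ (G j) (G k) := by
        simp_rw [sum_const, nsmul_eq_mul, sum_product]

namespace IsTwoDesign

theorem sum_norm_sq_sum_of_sum_eq_zero (h : IsTwoDesign S C m r l) {G : ι → E}
    (hG : ∑ j ∈ S, G j = 0) :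
    ∑ ω, ‖∑ j ∈ C ω, G j‖ ^ 2 = (r - l) * ∑ j ∈ S, ‖G j‖ ^ 2 := by
  have hcount {j k : ι} (hj : j ∈ S) (hk : k ∈ S) :
      (#{ω | j ∈ C ω ∧ k ∈ C ω} : ℝ) = l + if j = k then (r - l : ℝ) else 0 := by
    split_ifs with hjk
    · simp [← hjk, h.card_mem j hj]
    · simp [h.card_mem_and_mem j hj k hk hjk]
  rw [sum_norm_sq_sum_eq_sum_card_mul_inner h.subset, mul_sum]
  refine sum_congr rfl fun j hj => ?_
  rw [sum_congr rfl fun k hk => by rw [hcount hj hk]]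
  simp [add_mul, sum_add_distrib, ← mul_sum, ← inner_sum, hG, hj]

theorem mean_norm_sq_mean_sub_mean [Nonempty Ω] (h : IsTwoDesign S C m r l) (hm : m ≠ 0)
    (hS : S.Nontrivial) (f : ι → E) :
    mean univ (fun ω => ‖mean (C ω) f - mean S f‖ ^ 2) =
      ((m : ℝ)⁻¹ - (#S : ℝ)⁻¹) * (((#S : ℝ) - 1)⁻¹ * ∑ j ∈ S, ‖f j - mean S f‖ ^ 2) := by
  have hΩ : (Fintype.card Ω : ℝ) ≠ 0 := by exact_mod_cast Fintype.card_ne_zero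
  have hm : (m : ℝ) ≠ 0 := by exact_mod_cast hm
  have hS0 : (#S : ℝ) ≠ 0 := by exact_mod_cast hS.nonempty.card_ne_zero
  have hS1 : (#S : ℝ) - 1 ≠ 0 :=
    sub_ne_zero.2 (by exact_mod_cast (one_lt_card_iff_nontrivial.2 hS).ne')
  have hcentred : ∑ j ∈ S, (f j - mean S f) = 0 := by
    rw [sum_sub_const_eq_card_smul, sub_self, smul_zero]
  have hsum : (m : ℝ) ^ 2 * ∑ ω, ‖mean (C ω) f - mean S f‖ ^ 2 =
      (r - l) * ∑ j ∈ S, ‖f j - mean S f‖ ^ 2 := by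
    rw [← h.sum_norm_sq_sum_of_sum_eq_zero hcentred, mul_sum]
    simp_rw [sum_sub_const_eq_card_smul, h.card_block, norm_smul, mul_pow, Real.norm_natCast]
  have hdiff : (r - l : ℝ) = Fintype.card Ω * (m * (#S - m)) / (#S * (#S - 1)) :=
    eq_div_of_mul_eq (mul_ne_zero hS0 hS1)
      ((mul_comm _ _).trans (h.card_mul_card_sub_one_mul_sub hS.nonempty))
  rw [mean, card_univ, smul_eq_mul,
    eq_div_of_mul_eq (pow_ne_zero 2 hm) ((mul_comm _ _).trans hsum), hdiff]
  field_simp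

end IsTwoDesign

end Mean

section BatchPartition

variable {d N n p : ℕ}

theorem cast_card_univ_erase (i : Fin N) : (#(univ.erase i) : ℝ) = N - 1 := by
  rw [cast_card_erase_of_mem (mem_univ i), card_univ, Fintype.card_fin]

theorem nontrivial_univ_erase (hN : 3 ≤ N) (i : Fin N) : (univ.erase i).Nontrivial := by
  rw [← one_lt_card_iff_nontrivial, card_erase_of_mem (mem_univ i), card_univ, Fintype.card_fin]
  lia

/-- The sample space of random batch divisions. -/
abbrev BatchPartition (N n p : ℕ) : Type :=
  {P : Finset (Finset (Fin N)) // IsBatchPartition N n p P}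

theorem isBatchPartition_parts (Q : Finpartition (univ : Finset (Fin N))) (hn : #Q.parts = n)
    (hp : ∀ B ∈ Q.parts, #B = p) : IsBatchPartition N n p Q.parts := by
  refine ⟨hn, hp, fun i => card_eq_one.2 ?_⟩
  simpa [singleton_iff_unique_mem] using Q.existsUnique_mem (mem_univ i)

theorem nonempty_batchPartition (hp : p ≠ 0) (hN : N = p * n) :
    Nonempty (BatchPartition N n p) := by
  have hcard : n * p + 0 * (p + 1) = #(univ : Finset (Fin N)) := by simp [hN, mul_comm]
  let Q := (⊤ : Finpartition (univ : Finset (Fin N))).equitabilise hcard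
  have hbig : ∀ B ∈ Q.parts, #B ≠ p + 1 :=
    filter_eq_empty_iff.1 (card_eq_zero.1 (Finpartition.card_filter_equitabilise_big _ hcard))
  exact ⟨Q.parts, isBatchPartition_parts Q (Finpartition.card_parts_equitabilise _ hcard hp)
    fun B hB => (Finpartition.card_eq_of_mem_parts_equitabilise hB).resolve_right (hbig B hB)⟩

namespace IsBatchPartition

theorem finsetCongr {P : Finset (Finset (Fin N))} (h : IsBatchPartition N n p P)
    (σ : Equiv.Perm (Fin N)) : IsBatchPartition N n p (σ.finsetCongr.finsetCongr P) := by
  obtain ⟨hcard, hsize, hcover⟩ := h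
  refine ⟨by simpa using hcard, fun B hB => ?_, fun i => ?_⟩
  · obtain ⟨A, hA, rfl⟩ := mem_map.1 hB
    simpa using hsize A hA
  · rw [← hcover (σ.symm i), Equiv.finsetCongr_apply, filter_map, card_map]
    congr 1
    ext B
    simp [mem_map_equiv]

end IsBatchPartition

namespace BatchPartition

/-- The action of a permutation of the indices on batch partitions. -/
def relabel (σ : Equiv.Perm (Fin N)) : Equiv.Perm (BatchPartition N n p) :=
  σ.finsetCongr.finsetCongr.subtypeEquiv fun P =>
    ⟨fun h => h.finsetCongr σ, fun h => by
      simpa only [← Equiv.finsetCongr_symm, Equiv.symm_apply_apply] using h.finsetCongr σ.symm⟩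

theorem batchOf_relabel (σ : Equiv.Perm (Fin N)) (P : BatchPartition N n p) (i : Fin N) :
    batchOf (relabel σ P) (σ i) = (batchOf P i).map σ.toEmbedding := by
  have hparts : (relabel σ P).1 = P.1.map σ.finsetCongr.toEmbedding := rfl
  ext j
  obtain ⟨j, rfl⟩ := σ.surjective j
  simp [batchOf, hparts, -mem_map_equiv]

theorem existsUnique_mem (P : BatchPartition N n p) (i : Fin N) : ∃! B, B ∈ P.1 ∧ i ∈ B := by
  simpa [singleton_iff_unique_mem] using card_eq_one.1 (P.2.2.2 i)

theorem self_mem_batchOf (P : BatchPartition N n p) (i : Fin N) : i ∈ batchOf P i := by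
  obtain ⟨B, ⟨hB, hi⟩, -⟩ := P.existsUnique_mem i
  exact mem_filter.2 ⟨mem_univ i, B, hB, hi, hi⟩

theorem batchOf_mem (P : BatchPartition N n p) (i : Fin N) : batchOf P i ∈ P.1 := by
  obtain ⟨B, ⟨hB, hi⟩, hunique⟩ := P.existsUnique_mem i
  have hbatch : batchOf P i = B := by
    ext j
    rw [batchOf, mem_filter_univ]
    exact ⟨fun ⟨A, hA, hiA, hjA⟩ => hunique A ⟨hA, hiA⟩ ▸ hjA,
      fun hjB => ⟨B, hB, hi, hjB⟩⟩
  rwa [hbatch]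

theorem card_batchOf_erase (P : BatchPartition N n p) (i : Fin N) :
    #((batchOf P i).erase i) = p - 1 := by
  rw [card_erase_of_mem (P.self_mem_batchOf i), P.2.2.1 _ (P.batchOf_mem i)]

theorem exists_isTwoDesign_batchOf_erase (hN : 3 ≤ N) (i : Fin N) :
    ∃ r l, IsTwoDesign (univ.erase i)
      (fun P : BatchPartition N n p => (batchOf P i).erase i) (p - 1) r l := by
  refine exists_isTwoDesign_of_symmetric (nontrivial_univ_erase hN i)
    (fun P => erase_subset_erase i (subset_univ _)) (fun P => P.card_batchOf_erase i)
    fun σ hσ => ⟨relabel σ, fun P => ?_⟩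
  have hi : σ i = i := hσ i (notMem_erase i univ)
  have hbatch := batchOf_relabel σ P i
  rw [hi] at hbatch
  simp [hbatch, map_erase, hi]

end BatchPartition

variable (F : EuclideanSpace ℝ (Fin d) → EuclideanSpace ℝ (Fin d) → EuclideanSpace ℝ (Fin d))
  (x : Fin N → EuclideanSpace ℝ (Fin d)) (i : Fin N) (P : BatchPartition N n p)

theorem rbmNoise_eq_smul_mean_sub_mean (hp : p ≠ 0) :
    rbmNoise F x i P = (1 - (N : ℝ)⁻¹) •
      (mean (univ.erase i) (fun j => F (x i) (x j)) -
        mean ((batchOf P i).erase i) (fun j => F (x i) (x j))) := by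
  have hN : (N : ℝ) ≠ 0 := by exact_mod_cast i.pos.ne'
  have hpopulation : (N : ℝ)⁻¹ • ∑ j ∈ univ.erase i, F (x i) (x j) =
      (1 - (N : ℝ)⁻¹) • mean (univ.erase i) (fun j => F (x i) (x j)) := by
    rw [← card_smul_mean, smul_smul, cast_card_univ_erase, mul_sub, inv_mul_cancel₀ hN, mul_one]
  have hbatch : ((p : ℝ) - 1)⁻¹ • ∑ j ∈ (batchOf P i).erase i, F (x i) (x j) =
      mean ((batchOf P i).erase i) (fun j => F (x i) (x j)) := by
    rw [mean, P.card_batchOf_erase, Nat.cast_pred (Nat.pos_of_ne_zero hp)]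
  rw [rbmNoise, hpopulation, mul_smul, hbatch, smul_sub]

theorem norm_rbmNoise_sq (hp : p ≠ 0) :
    ‖rbmNoise F x i P‖ ^ 2 = (1 - (N : ℝ)⁻¹) ^ 2 *
      ‖mean ((batchOf P i).erase i) (fun j => F (x i) (x j)) -
        mean (univ.erase i) (fun j => F (x i) (x j))‖ ^ 2 := by
  rw [rbmNoise_eq_smul_mean_sub_mean F x i P hp, norm_smul, mul_pow, Real.norm_eq_abs, sq_abs,
    norm_sub_rev]

end BatchPartition

/-- Second moment of the random-batch noise: under a uniformly random partition of
`{1,…,N}` into `n` batches of size `p` (`N = pn ≥ 3`, `p ≥ 2`),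
`E|χ_i(z)|² = (1−1/N)²·(1/(p−1) − 1/(N−1))·Λ_i(z)` where
`Λ_i(z) = (1/(N−2))·Σ_{j≠i} |F(x_i,x_j) − (1/(N−1))·Σ_{k≠i} F(x_i,x_k)|²`. -/
theorem rbm_noise_second_moment (d n p N : ℕ) (hn : 1 ≤ n) (hp : 2 ≤ p) (hN : N = p * n)
    (hN3 : 3 ≤ N)
    (F : EuclideanSpace ℝ (Fin d) → EuclideanSpace ℝ (Fin d) → EuclideanSpace ℝ (Fin d))
    (x : Fin N → EuclideanSpace ℝ (Fin d)) (i : Fin N) :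
    (((Finset.univ : Finset {P : Finset (Finset (Fin N)) // IsBatchPartition N n p P}).card
        : ℝ)⁻¹) *
      ∑ P : {P : Finset (Finset (Fin N)) // IsBatchPartition N n p P}, ‖rbmNoise F x i P‖ ^ 2
      = (1 - (N : ℝ)⁻¹) ^ 2 * (((p : ℝ) - 1)⁻¹ - ((N : ℝ) - 1)⁻¹) *
        (((N : ℝ) - 2)⁻¹ *
          ∑ j ∈ Finset.univ.erase i,
            ‖F (x i) (x j) - ((N : ℝ) - 1)⁻¹ • ∑ k ∈ Finset.univ.erase i, F (x i) (x k)‖ ^ 2) := by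
  obtain ⟨r, l, hdesign⟩ :=
    BatchPartition.exists_isTwoDesign_batchOf_erase (n := n) (p := p) hN3 i
  have : Nonempty (BatchPartition N n p) := nonempty_batchPartition (by lia) hN
  calc _ = mean univ (fun P : BatchPartition N n p => ‖rbmNoise F x i P‖ ^ 2) := rfl
    _ = (1 - (N : ℝ)⁻¹) ^ 2 * mean univ (fun P : BatchPartition N n p =>
          ‖mean ((batchOf P i).erase i) (fun j => F (x i) (x j)) -
            mean (univ.erase i) (fun j => F (x i) (x j))‖ ^ 2) := by
        simp_rw [norm_rbmNoise_sq F x i _ (show p ≠ 0 by lia)]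
        exact mean_const_smul univ _ _
    _ = _ := by
        rw [hdesign.mean_norm_sq_mean_sub_mean (by lia) (nontrivial_univ_erase hN3 i), mean,
          cast_card_univ_erase, Nat.cast_pred (by lia), sub_sub (N : ℝ), one_add_one_eq_two,
          mul_assoc]
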